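/- Let v₀ > 0, V₀ > 0, and let s : [0,∞) → ℝ satisfy v₀(t−τ) ≤ s(τ) − s(t) ≤ V₀(t−τ) for 0 ≤ τ ≤ t. Fix t > 0 and x with s(t) − 1 ≤ x ≤ s(t). Then ∫_0^t (|x−s(τ)|/(2(t−τ))) · exp(−(x−s(τ))²/(4(t−τ)))/(2√(π(t−τ))) · V₀ dτ ≤ (V₀/2)·(1 + V₀/v₀). -/

import Mathlib

open Real MeasureTheory

/-!
Write the distance from `x` to the front at time `t - u` as `a + d`, where `a = s t - x ≥ 0` and
`v₀ * u ≤ d ≤ V₀ * u`. As the heat kernel decreases in the distance, the integrand (without the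
factor `V₀`) is at most `a / (2 * u) * heatKernel u a + V₀ / 2 * heatKernel u (v₀ * u)`.
The substitutions `η = (a / 2) * u ^ (-1 / 2)` and `η = (v₀ / 2) * u ^ (1 / 2)` turn the integrals
over `0 < u` of the two kernels into Gaussian integrals over `0 < η`: `a / (2 * u) * heatKernel u a`
has mass `1 / 2` and `heatKernel u (v₀ * u)` has mass `1 / v₀`.
-/

open Set

lemma intervalIntegral_mono_of_nonneg {f g : ℝ → ℝ} {a b : ℝ} (hab : a ≤ b)
    (hf : ∀ y ∈ Ioo a b, 0 ≤ f y) (hg : IntervalIntegrable g volume a b)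
    (hfg : ∀ y ∈ Ioo a b, f y ≤ g y) :
    ∫ y in a..b, f y ≤ ∫ y in a..b, g y := by
  simp only [intervalIntegral.integral_of_le hab, integral_Ioc_eq_integral_Ioo]
  exact integral_mono_of_nonneg ((ae_restrict_mem measurableSet_Ioo).mono hf)
    (hg.1.mono_set Ioo_subset_Ioc_self) ((ae_restrict_mem measurableSet_Ioo).mono hfg)

section PowerSubstitution

variable {c p : ℝ}

lemma integrableOn_rpow_sub_one_mul_exp_neg_sq (hc : c ≠ 0) (hp : p ≠ 0) :
    IntegrableOn (fun u : ℝ => u ^ (p - 1) * exp (-(c * u ^ p) ^ 2)) (Ioi 0) := by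
  refine (integrableOn_Ioi_comp_rpow_iff' (fun η => exp (-(c * η) ^ 2)) hp).2 ?_
  simp only [mul_pow, ← neg_mul]
  exact (integrable_exp_neg_mul_sq (by positivity)).integrableOn

lemma integral_rpow_sub_one_mul_exp_neg_sq (hc : 0 < c) (hp : p ≠ 0) :
    ∫ u in Ioi (0 : ℝ), u ^ (p - 1) * exp (-(c * u ^ p) ^ 2) = √π / (2 * c * |p|) := by
  have hgauss : ∫ η in Ioi (0 : ℝ), exp (-(c * η) ^ 2) = √π / (2 * c) := by
    simp only [mul_pow, ← neg_mul]
    rw [integral_gaussian_Ioi, sqrt_div pi_pos.le, sqrt_sq hc.le]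
    ring
  have hsubst := integral_comp_rpow_Ioi (fun η => exp (-(c * η) ^ 2)) hp
  simp only [smul_eq_mul, mul_assoc, integral_const_mul] at hsubst
  rw [eq_div_of_mul_eq (abs_ne_zero.2 hp) ((mul_comm _ _).trans hsubst), hgauss, div_div]

end PowerSubstitution

/-- The fundamental solution of the heat equation `∂ᵤ G = ∂²_y G` on the line, at time `u` and
displacement `y`. Its spatial derivative has absolute value `|y| / (2 * u) * heatKernel u y`, which
is the form in which the derivative of the single-layer potential is written. For `u ≤ 0` it takes
the junk value `0`. -/
noncomputable def heatKernel (u y : ℝ) : ℝ :=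
  exp (-y ^ 2 / (4 * u)) / (2 * √(π * u))

section HeatKernel

variable {a u v : ℝ}

lemma heatKernel_nonneg (u y : ℝ) : 0 ≤ heatKernel u y := by
  unfold heatKernel
  positivity

lemma heatKernel_abs (u y : ℝ) : heatKernel u |y| = heatKernel u y := by
  simp only [heatKernel, sq_abs]

lemma heatKernel_antitoneOn (hu : 0 ≤ u) : AntitoneOn (heatKernel u) (Ici 0) := by
  intro y hy z _ hyz
  rw [mem_Ici] at hy
  unfold heatKernel
  gcongr

lemma div_mul_heatKernel_eq_rpow (a : ℝ) (hu : 0 < u) :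
    a / (2 * u) * heatKernel u a =
      a / (4 * √π) * (u ^ (-1 / 2 - 1 : ℝ) * exp (-(a / 2 * u ^ (-1 / 2 : ℝ)) ^ 2)) := by
  have hpow : u ^ (-1 / 2 : ℝ) = (√u)⁻¹ := by
    rw [neg_div, rpow_neg hu.le, sqrt_eq_rpow]
  have hexp : -a ^ 2 / (4 * u) = -(a / 2 * (√u)⁻¹) ^ 2 := by
    rw [mul_pow, inv_pow, sq_sqrt hu.le]
    ring
  rw [heatKernel, hexp, rpow_sub_one hu.ne', hpow, sqrt_mul pi_pos.le]
  ring

lemma heatKernel_const_mul_eq_rpow (v : ℝ) (hu : 0 < u) :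
    heatKernel u (v * u) =
      1 / (2 * √π) * (u ^ (1 / 2 - 1 : ℝ) * exp (-(v / 2 * u ^ (1 / 2 : ℝ)) ^ 2)) := by
  have hpow : u ^ (1 / 2 - 1 : ℝ) = (√u)⁻¹ := by
    rw [show (1 / 2 - 1 : ℝ) = -(1 / 2) by norm_num, rpow_neg hu.le, sqrt_eq_rpow]
  have hexp : -(v * u) ^ 2 / (4 * u) = -(v / 2 * √u) ^ 2 := by
    rw [mul_pow _ √u, sq_sqrt hu.le]
    field_simp
    norm_num
  rw [heatKernel, hexp, hpow, ← sqrt_eq_rpow, sqrt_mul pi_pos.le]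
  ring

lemma integrableOn_div_mul_heatKernel (a : ℝ) :
    IntegrableOn (fun u => a / (2 * u) * heatKernel u a) (Ioi 0) := by
  rcases eq_or_ne a 0 with rfl | ha
  · simp
  · refine (integrableOn_congr_fun (fun u hu => div_mul_heatKernel_eq_rpow a hu)
      measurableSet_Ioi).2 ?_
    exact (integrableOn_rpow_sub_one_mul_exp_neg_sq (by positivity) (by norm_num)).const_mul _

lemma integral_div_mul_heatKernel (ha : 0 < a) :
    ∫ u in Ioi 0, a / (2 * u) * heatKernel u a = 1 / 2 := by
  rw [setIntegral_congr_fun measurableSet_Ioi fun u hu => div_mul_heatKernel_eq_rpow a hu,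
    integral_const_mul, integral_rpow_sub_one_mul_exp_neg_sq (by positivity) (by norm_num),
    abs_of_neg (by norm_num)]
  field_simp
  norm_num

lemma integrableOn_heatKernel_const_mul (hv : v ≠ 0) :
    IntegrableOn (fun u => heatKernel u (v * u)) (Ioi 0) := by
  refine (integrableOn_congr_fun (fun u hu => heatKernel_const_mul_eq_rpow v hu)
    measurableSet_Ioi).2 ?_
  exact (integrableOn_rpow_sub_one_mul_exp_neg_sq (by positivity) (by norm_num)).const_mul _

lemma integral_heatKernel_const_mul (hv : 0 < v) :
    ∫ u in Ioi 0, heatKernel u (v * u) = 1 / v := by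
  rw [setIntegral_congr_fun measurableSet_Ioi fun u hu => heatKernel_const_mul_eq_rpow v hu,
    integral_const_mul, integral_rpow_sub_one_mul_exp_neg_sq (by positivity) (by norm_num),
    abs_of_pos (by norm_num)]
  field_simp

end HeatKernel

section FrontMajorant

variable {a t u v y V : ℝ}

/-- Majorant of the absolute spatial derivative of the heat kernel at elapsed time `u` for a source
whose distance lies between `a + v * u` and `a + V * u`. -/
noncomputable def frontMajorant (a v V u : ℝ) : ℝ :=
  a / (2 * u) * heatKernel u a + V / 2 * heatKernel u (v * u)

lemma frontMajorant_nonneg (ha : 0 ≤ a) (hV : 0 ≤ V) (hu : 0 ≤ u) :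
    0 ≤ frontMajorant a v V u := by
  have := heatKernel_nonneg u a
  have := heatKernel_nonneg u (v * u)
  unfold frontMajorant
  positivity

lemma abs_div_mul_heatKernel_le_frontMajorant (ha : 0 ≤ a) (hv : 0 ≤ v) (hV : 0 ≤ V) (hu : 0 < u)
    (hlower : a + v * u ≤ |y|) (hupper : |y| ≤ a + V * u) :
    |y| / (2 * u) * heatKernel u y ≤ frontMajorant a v V u := by
  have hvu : 0 ≤ v * u := by positivity
  have hdist : heatKernel u y ≤ heatKernel u a := by
    rw [← heatKernel_abs u y]
    exact heatKernel_antitoneOn hu.le ha (abs_nonneg y) (by linarith)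
  have hfront : heatKernel u y ≤ heatKernel u (v * u) := by
    rw [← heatKernel_abs u y]
    exact heatKernel_antitoneOn hu.le hvu (abs_nonneg y) (by linarith)
  have hker := heatKernel_nonneg u y
  calc |y| / (2 * u) * heatKernel u y
      ≤ (a + V * u) / (2 * u) * heatKernel u y := by gcongr
    _ = a / (2 * u) * heatKernel u y + V / 2 * heatKernel u y := by
        field_simp
    _ ≤ a / (2 * u) * heatKernel u a + V / 2 * heatKernel u (v * u) := by gcongr

lemma integrableOn_frontMajorant (a V : ℝ) (hv : v ≠ 0) :
    IntegrableOn (frontMajorant a v V) (Ioi 0) :=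
  (integrableOn_div_mul_heatKernel a).add ((integrableOn_heatKernel_const_mul hv).const_mul _)

lemma intervalIntegrable_frontMajorant (a V : ℝ) (hv : v ≠ 0) (ht : 0 ≤ t) :
    IntervalIntegrable (frontMajorant a v V) volume 0 t :=
  (intervalIntegrable_iff_integrableOn_Ioc_of_le ht).2
    ((integrableOn_frontMajorant a V hv).mono_set Ioc_subset_Ioi_self)

lemma integral_frontMajorant_le (V : ℝ) (ha : 0 ≤ a) (hv : 0 < v) :
    ∫ u in Ioi 0, frontMajorant a v V u ≤ 1 / 2 * (1 + V / v) := by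
  have hdist : ∫ u in Ioi 0, a / (2 * u) * heatKernel u a ≤ 1 / 2 := by
    rcases ha.eq_or_lt with rfl | ha
    · simp
    · exact (integral_div_mul_heatKernel ha).le
  calc ∫ u in Ioi 0, frontMajorant a v V u
      = (∫ u in Ioi 0, a / (2 * u) * heatKernel u a) +
          V / 2 * ∫ u in Ioi 0, heatKernel u (v * u) := by
        simp only [frontMajorant]
        rw [integral_add (integrableOn_div_mul_heatKernel a)
          ((integrableOn_heatKernel_const_mul hv.ne').const_mul _), integral_const_mul]
    _ ≤ 1 / 2 + V / 2 * (1 / v) := by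
        rw [integral_heatKernel_const_mul hv]
        gcongr
    _ = 1 / 2 * (1 + V / v) := by ring

lemma intervalIntegral_frontMajorant_le (ha : 0 ≤ a) (hv : 0 < v) (hV : 0 ≤ V) (ht : 0 ≤ t) :
    ∫ u in 0..t, frontMajorant a v V u ≤ 1 / 2 * (1 + V / v) := by
  rw [intervalIntegral.integral_of_le ht]
  refine le_trans ?_ (integral_frontMajorant_le V ha hv)
  exact setIntegral_mono_set (integrableOn_frontMajorant a V hv.ne')
    ((ae_restrict_mem measurableSet_Ioi).mono fun u hu =>
      frontMajorant_nonneg ha hV (le_of_lt hu))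
    Ioc_subset_Ioi_self.eventuallyLE

lemma intervalIntegral_abs_div_mul_heatKernel_le {y : ℝ → ℝ} (ha : 0 ≤ a) (hv : 0 < v)
    (hV : 0 ≤ V) (ht : 0 ≤ t)
    (hy : ∀ τ ∈ Ioo 0 t, a + v * (t - τ) ≤ |y τ| ∧ |y τ| ≤ a + V * (t - τ)) :
    ∫ τ in 0..t, |y τ| / (2 * (t - τ)) * heatKernel (t - τ) (y τ) ≤ 1 / 2 * (1 + V / v) := by
  have hint : IntervalIntegrable (fun τ => frontMajorant a v V (t - τ)) volume 0 t := by
    simpa only [sub_zero, sub_self] using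
      ((intervalIntegrable_frontMajorant a V hv.ne' ht).comp_sub_left t).symm
  calc ∫ τ in 0..t, |y τ| / (2 * (t - τ)) * heatKernel (t - τ) (y τ)
      ≤ ∫ τ in 0..t, frontMajorant a v V (t - τ) := by
        refine intervalIntegral_mono_of_nonneg ht (fun τ hτ => ?_) hint fun τ hτ => ?_
        · have := sub_pos.2 hτ.2
          have := heatKernel_nonneg (t - τ) (y τ)
          positivity
        · exact abs_div_mul_heatKernel_le_frontMajorant ha hv.le hV (sub_pos.2 hτ.2)
            (hy τ hτ).1 (hy τ hτ).2
    _ = ∫ u in 0..t, frontMajorant a v V u := by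
        rw [intervalIntegral.integral_comp_sub_left (frontMajorant a v V), sub_self, sub_zero]
    _ ≤ 1 / 2 * (1 + V / v) := intervalIntegral_frontMajorant_le ha hv hV ht

end FrontMajorant

theorem derivative_near_front_bound_general (v₀ V₀ : ℝ) (hv₀ : 0 < v₀) (s : ℝ → ℝ)
    (hs : ∀ τ t : ℝ, 0 ≤ τ → τ ≤ t →
      v₀ * (t - τ) ≤ s τ - s t ∧ s τ - s t ≤ V₀ * (t - τ))
    (t x : ℝ) (ht : 0 < t) (hx : x ≤ s t) :
    ∫ τ in (0:ℝ)..t,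
        (|x - s τ| / (2 * (t - τ))) *
          (Real.exp (-(x - s τ) ^ 2 / (4 * (t - τ))) / (2 * Real.sqrt (Real.pi * (t - τ)))) * V₀
      ≤ (V₀ / 2) * (1 + V₀ / v₀) := by
  have hV₀ : 0 ≤ V₀ := by
    have := hs 0 t le_rfl ht.le
    nlinarith
  have hdist : ∀ τ ∈ Ioo 0 t, s t - x + v₀ * (t - τ) ≤ |x - s τ| ∧
      |x - s τ| ≤ s t - x + V₀ * (t - τ) := fun τ hτ => by
    obtain ⟨hlower, hupper⟩ := hs τ t hτ.1.le hτ.2.le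
    have : 0 ≤ v₀ * (t - τ) := mul_nonneg hv₀.le (sub_nonneg.2 hτ.2.le)
    rw [abs_of_nonpos (by linarith)]
    constructor <;> linarith
  calc _ = (∫ τ in 0..t, |x - s τ| / (2 * (t - τ)) * heatKernel (t - τ) (x - s τ)) * V₀ :=
        intervalIntegral.integral_mul_const ..
    _ ≤ 1 / 2 * (1 + V₀ / v₀) * V₀ := by
        gcongr
        exact intervalIntegral_abs_div_mul_heatKernel_le (sub_nonneg.2 hx) hv₀ hV₀ ht.le hdist
    _ = V₀ / 2 * (1 + V₀ / v₀) := by ring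

theorem derivative_near_front_bound (v₀ V₀ : ℝ) (hv₀ : 0 < v₀) (hV₀ : 0 < V₀)
    (s : ℝ → ℝ)
    (hs : ∀ τ t : ℝ, 0 ≤ τ → τ ≤ t →
      v₀ * (t - τ) ≤ s τ - s t ∧ s τ - s t ≤ V₀ * (t - τ))
    (t x : ℝ) (ht : 0 < t) (hx₁ : s t - 1 ≤ x) (hx₂ : x ≤ s t) :
    ∫ τ in (0:ℝ)..t,
        (|x - s τ| / (2 * (t - τ))) *
          (Real.exp (-(x - s τ) ^ 2 / (4 * (t - τ))) / (2 * Real.sqrt (Real.pi * (t - τ)))) * V₀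
      ≤ (V₀ / 2) * (1 + V₀ / v₀) :=
  derivative_near_front_bound_general v₀ V₀ hv₀ s hs t x ht hx₂
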